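/- Let D ⊆ ℂ^m be a domain and let P, Q ∈ ℂ[z_1,…,z_m] be polynomials having no common non-constant polynomial factor (i.e. every common divisor of P and Q in ℂ[z_1,…,z_m] is a unit). Suppose f is holomorphic on D and f(z)·Q(z) = P(z) for every z ∈ D. Then Q(z) ≠ 0 for every z ∈ D. -/

import Mathlib

open Metric Complex

lemma aux_line {m : ℕ} {f : (Fin m → ℂ) → ℂ} (w v : Fin m → ℂ) (t : ℂ)
    (h : DifferentiableAt ℂ f (w + t • v)) :
    HasDerivAt (fun t : ℂ => f (w + t • v)) (fderiv ℂ f (w + t • v) v) t := by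
  have hlin : HasDerivAt (fun t : ℂ => w + t • v) v t := by
    simpa using ((hasDerivAt_id t).smul_const v).const_add w
  exact h.hasFDerivAt.comp_hasDerivAt t hlin

lemma aux_diff {m : ℕ} {U : Set (Fin m → ℂ)} (hU : IsOpen U) {f : (Fin m → ℂ) → ℂ}
    (hf : DifferentiableOn ℂ f U) (v : Fin m → ℂ) :
    DifferentiableOn ℂ (fun z => fderiv ℂ f z v) U := by
  intro z hz
  apply DifferentiableAt.differentiableWithinAt
  -- a ball where `f` is close to `f z`
  have hcont : ContinuousAt f z := hf.continuousOn.continuousAt (hU.mem_nhds hz)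
  obtain ⟨S, hS, hball⟩ : ∃ S > 0, ball z S ⊆ U ∩ {w | dist (f w) (f z) < 1} :=
    Metric.mem_nhds_iff.1 (Filter.inter_mem (hU.mem_nhds hz)
      (hcont.eventually (ball_mem_nhds _ one_pos)))
  have hSU : ball z S ⊆ U := fun w hw => (hball hw).1
  obtain ⟨R, hR, hRS⟩ : ∃ R > 0, 4 * R = S := ⟨S / 4, by positivity, by ring⟩
  have hbd : ∀ w ∈ ball z (3 * R), ‖fderiv ℂ f w‖ ≤ 2 / R := by
    intro w hw
    have hsub : ball w R ⊆ ball z S := by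
      apply ball_subset_ball'
      rw [mem_ball] at hw
      linarith
    refine norm_fderiv_le_div_of_mapsTo_ball (hf.mono (hsub.trans hSU)) ?_ hR
    intro y hy
    have h1 := (hball (hsub hy)).2
    have h2 := (hball (hsub (mem_ball_self hR))).2
    simp only [Set.mem_ofPred_eq] at h1 h2
    rw [mem_closedBall]
    linarith [dist_triangle_right (f y) (f w) (f z)]
  obtain ⟨r, hr, hrv⟩ : ∃ r > 0, r * ‖v‖ < R := by
    refine ⟨R / (‖v‖ + 1), by positivity, ?_⟩
    rw [div_mul_eq_mul_div, div_lt_iff₀ (by positivity)]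
    nlinarith [norm_nonneg v]
  have hin : ∀ w ∈ ball z R, ∀ t : ℂ, ‖t‖ ≤ r → w + t • v ∈ ball z (3 * R) := by
    intro w hw t ht
    rw [mem_ball, dist_eq_norm] at *
    calc ‖w + t • v - z‖ = ‖(w - z) + t • v‖ := by congr 1; abel
      _ ≤ ‖w - z‖ + ‖t • v‖ := norm_add_le _ _
      _ ≤ ‖w - z‖ + r * ‖v‖ := by rw [norm_smul]; gcongr
      _ < 3 * R := by linarith
  have h3S : ball z (3 * R) ⊆ U := (ball_subset_ball (by linarith)).trans hSU
  have hdiff : ∀ w ∈ ball z (3 * R), DifferentiableAt ℂ f w := fun w hw =>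
    hf.differentiableAt (hU.mem_nhds (h3S hw))
  have hcirc : ∀ θ : ℝ, ‖circleMap 0 r θ‖ ≤ r := fun θ => by simp [abs_of_pos hr]
  -- Cauchy formula
  have hform : ∀ w ∈ ball z R, fderiv ℂ f w v = (2 * Real.pi * I : ℂ)⁻¹ •
      ∫ θ : ℝ in (0 : ℝ)..2 * Real.pi, (deriv (circleMap 0 r) θ * ((circleMap 0 r θ) ^ 2)⁻¹) •
        f (w + circleMap 0 r θ • v) := by
    intro w hw
    have hw3 : w ∈ ball z (3 * R) := by simpa using hin w hw 0 (by simpa using hr.le)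
    have hcl : Continuous (fun t : ℂ => w + t • v) := by fun_prop
    have h := two_pi_I_inv_smul_circleIntegral_sub_sq_inv_smul_of_differentiable
      (U := (fun t : ℂ => w + t • v) ⁻¹' ball z (3 * R)) (isOpen_ball.preimage hcl)
      (c := 0) (w₀ := 0) (R := r) (f := fun t : ℂ => f (w + t • v))
      (fun t ht => hin w hw t (by simpa using ht))
      (fun t ht => (aux_line w v t (hdiff _ ht)).differentiableAt.differentiableWithinAt)
      (mem_ball_self hr)
    have h2 : HasDerivAt (fun t : ℂ => f (w + t • v)) (fderiv ℂ f w v) 0 := by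
      simpa using aux_line w v 0 (by simpa using hdiff w hw3)
    rw [← h2.deriv, ← h, circleIntegral]
    simp [mul_assoc]
  have hev : (fun w => fderiv ℂ f w v) =ᶠ[nhds z] fun w => (2 * Real.pi * I : ℂ)⁻¹ •
      ∫ θ : ℝ in (0 : ℝ)..2 * Real.pi, (deriv (circleMap 0 r) θ * ((circleMap 0 r θ) ^ 2)⁻¹) •
        f (w + circleMap 0 r θ • v) :=
    Filter.eventuallyEq_of_mem (ball_mem_nhds z hR) hform
  refine DifferentiableAt.congr_of_eventuallyEq ?_ hev
  apply DifferentiableAt.fun_const_smul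
  have hc : Continuous fun θ : ℝ => (deriv (circleMap 0 r) θ * ((circleMap 0 r θ) ^ 2)⁻¹) := by
    simp only [deriv_circleMap]
    refine Continuous.mul (by fun_prop) (Continuous.inv₀ (by fun_prop) ?_)
    intro θ
    simp [hr.ne']
  have hcn : ∀ θ : ℝ, ‖deriv (circleMap 0 r) θ * ((circleMap 0 r θ) ^ 2)⁻¹‖ ≤ r * (r ^ 2)⁻¹ := by
    intro θ
    simp [abs_of_pos hr]
  have hFc : ∀ w ∈ ball z R, Continuous fun θ : ℝ =>
      (deriv (circleMap 0 r) θ * ((circleMap 0 r θ) ^ 2)⁻¹) • f (w + circleMap 0 r θ • v) := by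
    intro w hw
    refine hc.smul (continuous_iff_continuousAt.2 fun θ => ?_)
    exact ContinuousAt.comp (g := f) (f := fun θ : ℝ => w + circleMap 0 r θ • v)
      (hdiff _ (hin w hw _ (hcirc θ))).continuousAt (by fun_prop)
  refine (intervalIntegral.hasFDerivAt_integral_of_dominated_of_fderiv_le
    (F' := fun w θ => (deriv (circleMap 0 r) θ * ((circleMap 0 r θ) ^ 2)⁻¹) •
      fderiv ℂ f (w + circleMap 0 r θ • v)) (bound := fun _ => r * (r ^ 2)⁻¹ * (2 / R))
    (ball_mem_nhds z hR) ?_ ?_ ?_ ?_ ?_ ?_).differentiableAt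
  · filter_upwards [ball_mem_nhds z hR] with w hw
    exact (hFc w hw).aestronglyMeasurable
  · exact (hFc z (mem_ball_self hR)).intervalIntegrable _ _
  · refine hc.aestronglyMeasurable.smul ?_
    refine Measurable.aestronglyMeasurable ?_
    refine (measurable_fderiv ℂ f).comp ?_
    exact Continuous.measurable (by fun_prop)
  · refine Filter.Eventually.of_forall fun θ _ w hw => ?_
    rw [norm_smul]
    exact mul_le_mul (hcn θ) (hbd _ (hin w hw _ (hcirc θ))) (norm_nonneg _) (by positivity)
  · simp
  · refine Filter.Eventually.of_forall fun θ _ w hw => ?_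
    have := (hdiff _ (hin w hw _ (hcirc θ))).hasFDerivAt
    have h4 : HasFDerivAt (fun w => f (w + circleMap 0 r θ • v))
        (fderiv ℂ f (w + circleMap 0 r θ • v)) w := by
      simpa using! this.comp w ((hasFDerivAt_id w).add_const (circleMap 0 r θ • v))
    exact h4.const_smul
      (deriv (circleMap 0 r) θ * ((circleMap 0 r θ) ^ 2)⁻¹)


open MvPolynomial

lemma aux_hom {m k : ℕ} {A : MvPolynomial (Fin m) ℂ} (hA : A.IsHomogeneous k) (t : ℂ)
    (v : Fin m → ℂ) : eval (t • v) A = t ^ k * eval v A := by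
  rw [eval_eq, eval_eq, Finset.mul_sum]
  refine Finset.sum_congr rfl fun d hd => ?_
  have h := hA (mem_support_iff.1 hd)
  simp only [Pi.smul_apply, smul_eq_mul, mul_pow, Finset.prod_mul_distrib, Finset.prod_pow_eq_pow_sum]
  have h' : ∑ i ∈ d.support, d i = k := by
    rw [← h, Finsupp.weight_apply, Finsupp.sum]
    simp
  rw [h']
  ring

lemma aux_taylor {m : ℕ} {U : Set (Fin m → ℂ)} (hU : IsOpen U) (h0 : 0 ∈ U) (k : ℕ) :
    ∀ f : (Fin m → ℂ) → ℂ, DifferentiableOn ℂ f U →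
    ∃ A : MvPolynomial (Fin m) ℂ, A.IsHomogeneous k ∧
      ∀ v, iteratedDeriv k (fun t : ℂ => f (t • v)) 0 = eval v A := by
  induction k with
  | zero =>
    intro f hf
    exact ⟨C (f 0), isHomogeneous_C _ _, by simp⟩
  | succ k ih =>
    intro f hf
    choose A hA hAe using fun i : Fin m => ih _ (aux_diff hU hf (Pi.single i 1))
    refine ⟨∑ i, X i * A i, ?_, ?_⟩
    · refine IsHomogeneous.sum _ _ _ fun i _ => ?_
      simpa [add_comm] using (isHomogeneous_X ℂ i).mul (hA i)
    · intro v
      have hcl : Continuous (fun t : ℂ => t • v) := by fun_prop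
      have hV : IsOpen ((fun t : ℂ => t • v) ⁻¹' U) := hU.preimage hcl
      have h0V : (0 : ℂ) ∈ (fun t : ℂ => t • v) ⁻¹' U := by simpa using h0
      have hline : ∀ g : (Fin m → ℂ) → ℂ, DifferentiableOn ℂ g U → ∀ t : ℂ, t • v ∈ U →
          HasDerivAt (fun t : ℂ => g (t • v)) (fderiv ℂ g (t • v) v) t := by
        intro g hg t ht
        have := aux_line (f := g) 0 v t (by simpa using hg.differentiableAt (hU.mem_nhds ht))
        simpa using this
      have hev : deriv (fun t : ℂ => f (t • v)) =ᶠ[nhds 0]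
          fun t => ∑ i, v i * fderiv ℂ f (t • v) (Pi.single i 1) := by
        filter_upwards [hV.mem_nhds h0V] with t ht
        rw [(hline f hf t ht).deriv]
        generalize fderiv ℂ f (t • v) = L
        conv_lhs => rw [pi_eq_sum_univ' v]
        simp [map_sum]
      rw [iteratedDeriv_succ', hev.iteratedDeriv_eq, iteratedDeriv_fun_sum]
      · simp only [eval_sum, eval_mul, eval_X, ← hAe]
        refine Finset.sum_congr rfl fun i _ => ?_
        rw [iteratedDeriv_const_mul_field]
      · intro i _
        refine ContDiffAt.mul contDiffAt_const ?_
        apply AnalyticAt.contDiffAt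
        refine DifferentiableOn.analyticAt (s := (fun t : ℂ => t • v) ⁻¹' U) ?_ (hV.mem_nhds h0V)
        intro t ht
        exact (hline _ (aux_diff hU hf _) t ht).differentiableAt.differentiableWithinAt

lemma aux_poly (N : ℕ) (c : ℕ → ℂ) (i : ℕ) (hi : i < N) :
    iteratedDeriv i (fun t : ℂ => ∑ k ∈ Finset.range N, t ^ k * c k) 0 = i.factorial * c i := by
  rw [iteratedDeriv_fun_sum (fun k _ => by fun_prop)]
  rw [Finset.sum_eq_single i]
  · simp only [mul_comm _ (c i)]
    rw [iteratedDeriv_const_mul_field, iteratedDeriv_fun_pow_zero]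
    simp [mul_comm]
  · intro k _ hk
    simp only [mul_comm _ (c k)]
    rw [iteratedDeriv_const_mul_field, iteratedDeriv_fun_pow_zero]
    simp [hk, hk.symm]
  · simp [hi]

lemma aux_mem {m : ℕ} (n : ℕ) (H : MvPolynomial (Fin m) ℂ)
    (h : ∀ v, ∀ i < n, iteratedDeriv i (fun t : ℂ => eval (t • v) H) 0 = 0) :
    H ∈ idealOfVars (Fin m) ℂ ^ n := by
  have key : ∀ i < n, homogeneousComponent i H = 0 := by
    intro i hi
    by_cases hid : i < H.totalDegree + 1
    · apply MvPolynomial.funext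
      intro v
      have h1 := h v i hi
      have h2 : (fun t : ℂ => eval (t • v) H) = fun t : ℂ => ∑ k ∈ Finset.range (H.totalDegree + 1),
          t ^ k * eval v (homogeneousComponent k H) := by
        ext t
        conv_lhs => rw [← sum_homogeneousComponent H]
        rw [eval_sum]
        exact Finset.sum_congr rfl fun k _ => aux_hom (homogeneousComponent_isHomogeneous _ _) t v
      rw [h2, aux_poly _ (fun k => eval v (homogeneousComponent k H)) i hid] at h1
      simpa [Nat.factorial_ne_zero] using h1
    · exact homogeneousComponent_eq_zero _ _ (by omega)
  rw [mem_pow_idealOfVars_iff']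
  intro x hx
  have := congrArg (coeff x) (key _ hx)
  simpa [coeff_homogeneousComponent] using this

lemma aux_main {m : ℕ} {D : Set (Fin m → ℂ)} (hDo : IsOpen D) (h0 : 0 ∈ D)
    (P Q : MvPolynomial (Fin m) ℂ)
    (hcop : IsRelPrime Q P)
    (f : (Fin m → ℂ) → ℂ) (hf : DifferentiableOn ℂ f D)
    (heq : ∀ z ∈ D, f z * eval z Q = eval z P) : eval 0 Q ≠ 0 := by
  intro hQ
  have key : ∀ n : ℕ, ∃ F, P - F * Q ∈ idealOfVars (Fin m) ℂ ^ n := by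
    intro n
    choose A hA hAe using fun k => aux_taylor hDo h0 k f hf
    refine ⟨∑ k ∈ Finset.range n, C ((k.factorial : ℂ)⁻¹) * A k, aux_mem n _ fun v => ?_⟩
    set F := ∑ k ∈ Finset.range n, C ((k.factorial : ℂ)⁻¹) * A k with hF
    have hcl : Continuous (fun t : ℂ => t • v) := by fun_prop
    have hV : IsOpen ((fun t : ℂ => t • v) ⁻¹' D) := hDo.preimage hcl
    have h0V : (0 : ℂ) ∈ (fun t : ℂ => t • v) ⁻¹' D := by simpa using h0
    have han : AnalyticAt ℂ (fun t : ℂ => f (t • v)) 0 := by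
      refine DifferentiableOn.analyticAt (s := (fun t : ℂ => t • v) ⁻¹' D) ?_ (hV.mem_nhds h0V)
      exact hf.comp (by fun_prop) (fun t ht => ht)
    have hpoly : ∀ H : MvPolynomial (Fin m) ℂ, AnalyticAt ℂ (fun t : ℂ => eval (t • v) H) 0 := by
      intro H
      have : (fun t : ℂ => eval (t • v) H) = fun t : ℂ => aeval (t • v) H := by
        ext t; simp [aeval_eq_eval]
      rw [this]
      exact AnalyticAt.aeval_mvPolynomial (f := fun t : ℂ => t • v) (fun i => by simp; fun_prop) H
    have hFt : (fun t : ℂ => eval (t • v) F) =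
        fun t : ℂ => ∑ k ∈ Finset.range n, t ^ k * ((k.factorial : ℂ)⁻¹ * eval v (A k)) := by
      ext t
      rw [hF, eval_sum]
      refine Finset.sum_congr rfl fun k _ => ?_
      rw [eval_mul, eval_C, aux_hom (hA k)]
      ring
    have hsub : AnalyticAt ℂ (fun t : ℂ => f (t • v) - eval (t • v) F) 0 := han.sub (hpoly F)
    have hord : (n : ℕ∞) ≤ analyticOrderAt (fun t : ℂ => f (t • v) - eval (t • v) F) 0 := by
      rw [natCast_le_analyticOrderAt_iff_iteratedDeriv_eq_zero hsub]
      intro i hi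
      rw [iteratedDeriv_fun_sub han.contDiffAt (hpoly F).contDiffAt, hAe, hFt,
        aux_poly n (fun k => (k.factorial : ℂ)⁻¹ * eval v (A k)) i hi]
      rw [mul_inv_cancel_left₀ (by exact_mod_cast Nat.factorial_ne_zero i), sub_self]
    rw [← natCast_le_analyticOrderAt_iff_iteratedDeriv_eq_zero (hpoly _)]
    have hev : (fun t : ℂ => eval (t • v) (P - F * Q)) =ᶠ[nhds 0]
        (fun t : ℂ => f (t • v) - eval (t • v) F) * (fun t : ℂ => eval (t • v) Q) := by
      filter_upwards [hV.mem_nhds h0V] with t ht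
      simp only [Pi.mul_apply, eval_sub, eval_mul, ← heq _ ht]
      ring
    rw [analyticOrderAt_congr hev, analyticOrderAt_mul hsub (hpoly Q)]
    exact hord.trans le_self_add
  let I := idealOfVars (Fin m) ℂ
  have hmem : Ideal.Quotient.mk (Ideal.span {Q}) P ∈
      (⨅ i : ℕ, I ^ i • ⊤ : Submodule (MvPolynomial (Fin m) ℂ)
        (MvPolynomial (Fin m) ℂ ⧸ Ideal.span {Q})) := by
    rw [Submodule.mem_iInf]
    intro n
    obtain ⟨F, hF⟩ := key n
    have h1 : Ideal.Quotient.mk (Ideal.span {Q}) P =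
        (P - F * Q) • (1 : MvPolynomial (Fin m) ℂ ⧸ Ideal.span {Q}) := by
      change _ = Ideal.Quotient.mk (Ideal.span {Q}) ((P - F * Q) * 1)
      rw [mul_one, Ideal.Quotient.eq]
      simpa using Ideal.mul_mem_left _ F (Ideal.mem_span_singleton_self Q)
    rw [h1]
    exact Submodule.smul_mem_smul hF trivial
  obtain ⟨⟨r, hr⟩, hrP⟩ := (Ideal.mem_iInf_smul_pow_eq_bot_iff I _).1 hmem
  have hdvd : Q ∣ (r - 1) * P := by
    change Ideal.Quotient.mk (Ideal.span {Q}) (r * P) = _ at hrP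
    rw [Ideal.Quotient.eq, Ideal.mem_span_singleton] at hrP
    simpa [sub_mul] using hrP
  have hd := hcop.dvd_of_dvd_mul_right hdvd
  have hr0 : eval 0 r = 0 := by
    have : I ≤ RingHom.ker (eval (0 : Fin m → ℂ)) := by
      refine Ideal.span_le.2 ?_
      rintro _ ⟨i, rfl⟩
      simp [RingHom.mem_ker]
    exact this hr
  obtain ⟨g, hg⟩ := hd
  have := congrArg (eval 0) hg
  rw [eval_sub, eval_mul, hr0, hQ] at this
  simp at this

/-- If `P, Q ∈ ℂ[z_1,…,z_m]` have no common non-constant factor, `f` is holomorphic on a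
domain `D ⊆ ℂ^m`, and `f·Q = P` on `D`, then `Q` has no zeros in `D`. -/
theorem denominator_nonvanishing (m : ℕ)
    (D : Set (Fin m → ℂ)) (hDo : IsOpen D) (hDc : IsConnected D)
    (P Q : MvPolynomial (Fin m) ℂ)
    (hcop : ∀ R : MvPolynomial (Fin m) ℂ, R ∣ P → R ∣ Q → IsUnit R)
    (f : (Fin m → ℂ) → ℂ) (hf : DifferentiableOn ℂ f D)
    (heq : ∀ z ∈ D, f z * MvPolynomial.eval z Q = MvPolynomial.eval z P) :
    ∀ z ∈ D, MvPolynomial.eval z Q ≠ 0 := by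
  intro z hz
  let φ : MvPolynomial (Fin m) ℂ →ₐ[ℂ] MvPolynomial (Fin m) ℂ := aeval fun i => X i + C (z i)
  let ψ : MvPolynomial (Fin m) ℂ →ₐ[ℂ] MvPolynomial (Fin m) ℂ := aeval fun i => X i - C (z i)
  have h1 : ∀ p, ψ (φ p) = p := by
    intro p
    have : ψ.comp φ = AlgHom.id ℂ _ := by
      apply MvPolynomial.algHom_ext
      intro i
      simp [φ, ψ, ← algebraMap_eq]
    exact DFunLike.congr_fun this p
  have h2 : ∀ p, φ (ψ p) = p := by
    intro p
    have : φ.comp ψ = AlgHom.id ℂ _ := by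
      apply MvPolynomial.algHom_ext
      intro i
      simp [φ, ψ, ← algebraMap_eq]
    exact DFunLike.congr_fun this p
  have hev : ∀ w p, eval w (φ p) = eval (w + z) p := by
    intro w p
    have : (aeval w : MvPolynomial (Fin m) ℂ →ₐ[ℂ] ℂ).comp φ = aeval (w + z) := by
      apply MvPolynomial.algHom_ext
      intro i
      simp [φ]
    have := DFunLike.congr_fun this p
    simpa [aeval_eq_eval] using this
  have := aux_main (D := (fun w => w + z) ⁻¹' D) (hDo.preimage (by fun_prop)) (by simpa using hz)
    (φ P) (φ Q) ?_ (fun w => f (w + z)) (hf.comp (by fun_prop) fun w hw => hw) ?_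
  · rwa [hev, zero_add] at this
  · intro R hRQ hRP
    have := hcop (ψ R) (by simpa [h1] using map_dvd ψ hRP) (by simpa [h1] using map_dvd ψ hRQ)
    simpa [h2] using this.map φ
  · intro w hw
    rw [hev, hev]
    exact heq _ hw
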